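/- Let τ = {nop, set, swap, free} and let (sup, sig) be a τ-region of the union U^{σ1}_φ that inhibits the event k at the state h_{0,2} (i.e., sig(k) is undefined at sup(h_{0,2})). Then M = {X ∈ V(φ) : sig(X) = set} is a one-in-three model of φ. -/

import Mathlib

/-!
Every region of `U^{σ1}_φ` inhibiting `k` at `h_{0,2}` is rigid.  The only partial interaction of
`{nop, set, swap, free}` is `free`, undefined at `1`, so `sig k = free` and `sup h_{0,2} = 1`
(`k_free`), and every endpoint of a `k`-edge has support `0`.  Pushing this through the gadgets
(all edges used, apart from the one-directional ones, relate their endpoints symmetrically, see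
`Joins`) yields:

* the `H_j` force `sig m = swap` and `sig v_j = swap` (`m_swap`, `v_swap`);
* `F_0`, `F_1`, `F_2` force `sig z ∈ {nop, swap}`, hence `zz` preserves the support (`z_flip`, `zz_eq`);
* therefore `G_j` and `D_l` force `w_j` and `a_l` to fix `0`, i.e. to be `nop` or `free`
  (`w_keep`, `a_keep`), so that their edges preserve the support.

In `T_{i,0}` the support is `1` right after `v_{4i}` and `0` right before `w_i`.  Along the path
between them only a variable event with signature `set` can change the support, so some variable
of the clause is mapped to `set` (`exists_set`).  In `T_{i,1}`, `T_{i,2}`, `T_{i,3}`, two variable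
edges are linked by a `swap` edge; both endpoints of a bidirectional `set` edge have support `1`,
so no two variables of the clause are mapped to `set` (`not_both_set`).
-/

namespace PetriNets

/-- The eight boolean interactions. -/
inductive Interaction : Type
  | nop | inp | out | set | res | swap | used | free
  deriving DecidableEq

/-- The partial function on `{0,1}` (encoded as `Bool`) denoted by an interaction. -/
def Interaction.apply : Interaction → Bool → Option Bool
  | .nop, x => some x
  | .inp, x => if x then some false else none
  | .out, x => if x then none else some true
  | .set, _ => some true
  | .res, _ => some false
  | .swap, x => some (!x)
  | .used, x => if x then some true else none
  | .free, x => if x then none else some false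

/-- A transition system with states `S`, events `E`, a partial transition
function and an initial state. -/
structure TS (S E : Type) where
  delta : S → E → Option S
  init : S

/-- A `τ`-region of a transition system. -/
structure Region (τ : Set Interaction) {S E : Type} (A : TS S E) where
  sup : S → Bool
  sig : E → Interaction
  sig_mem : ∀ e : E, sig e ∈ τ
  consistent : ∀ (s : S) (e : E) (s' : S), A.delta s e = some s' →
    (sig e).apply (sup s) = some (sup s')

/-- The state separation property. -/
def SSP (τ : Set Interaction) {S E : Type} (A : TS S E) : Prop :=
  ∀ s s' : S, s ≠ s' → ∃ R : Region τ A, R.sup s ≠ R.sup s'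

/-- The event state separation property. -/
def ESSP (τ : Set Interaction) {S E : Type} (A : TS S E) : Prop :=
  ∀ (s : S) (e : E), A.delta s e = none →
    ∃ R : Region τ A, (R.sig e).apply (R.sup s) = none

/-- `τ`-feasibility: both the `τ`-SSP and the `τ`-ESSP. -/
def Feasible (τ : Set Interaction) {S E : Type} (A : TS S E) : Prop :=
  SSP τ A ∧ ESSP τ A

/-- A union of transition systems with pairwise disjoint states (disjointness is
enforced by the sigma type of states) over a common event alphabet. -/
def Union (ι : Type) (S : ι → Type) (E : Type) : Type := (i : ι) → TS (S i) E

/-- A `τ`-region of a union: its restriction to every component is a region. -/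
structure URegion (τ : Set Interaction) {ι : Type} {S : ι → Type} {E : Type}
    (U : Union ι S E) where
  sup : (Σ i : ι, S i) → Bool
  sig : E → Interaction
  sig_mem : ∀ e : E, sig e ∈ τ
  consistent : ∀ (i : ι) (s : S i) (e : E) (s' : S i), (U i).delta s e = some s' →
    (sig e).apply (sup ⟨i, s⟩) = some (sup ⟨i, s'⟩)

/-- SSP for unions: distinct states of a common component are separable. -/
def USSP (τ : Set Interaction) {ι : Type} {S : ι → Type} {E : Type}
    (U : Union ι S E) : Prop :=
  ∀ (i : ι) (s s' : S i), s ≠ s' → ∃ R : URegion τ U, R.sup ⟨i, s⟩ ≠ R.sup ⟨i, s'⟩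

/-- ESSP for unions: every event is inhibitable at every state where it does not occur. -/
def UESSP (τ : Set Interaction) {ι : Type} {S : ι → Type} {E : Type}
    (U : Union ι S E) : Prop :=
  ∀ (e : E) (i : ι) (s : S i), (U i).delta s e = none →
    ∃ R : URegion τ U, (R.sig e).apply (R.sup ⟨i, s⟩) = none

/-- The type of nets `{nop, set, swap, free}`, i.e. the single member of `σ1`. -/
def tau1 : Set Interaction :=
  {Interaction.nop, Interaction.set, Interaction.swap, Interaction.free}

/-- Membership in `σ2 = { {nop, set, swap, used} ∪ ω : ω ⊆ {res, free} }`. -/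
def sigma2mem (τ : Set Interaction) : Prop :=
  ∃ ω : Set Interaction, ω ⊆ {Interaction.res, Interaction.free} ∧
    τ = ({Interaction.nop, Interaction.set, Interaction.swap, Interaction.used} :
      Set Interaction) ∪ ω

/-- Direction of an edge of a chain-shaped transition system. -/
inductive Dir : Type
  | fwd | bwd | both
  deriving DecidableEq

def Dir.allowsFwd : Dir → Bool
  | .fwd => true
  | .both => true
  | .bwd => false

def Dir.allowsBwd : Dir → Bool
  | .bwd => true
  | .both => true
  | .fwd => false

def echk {E : Type} [DecidableEq E] (o : Option (E × Dir)) (e : E) (fwd : Bool) : Bool :=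
  match o with
  | none => false
  | some (e', d) => decide (e' = e) && (if fwd then d.allowsFwd else d.allowsBwd)

/-- Transition function of a chain with edge specification `spec`:
`spec[t] = (e, d)` means an edge between states `t` and `t + 1` labelled `e`
with direction `d` (forward, backward or both). -/
def chainDelta {E : Type} [DecidableEq E] (spec : List (E × Dir)) (s : ℕ) (e : E) :
    Option ℕ :=
  if echk spec[s]? e true = true then some (s + 1)
  else if s ≠ 0 ∧ echk spec[s - 1]? e false = true then some (s - 1)
  else none

/-- A chain-shaped transition system with `n + 1` states whose initial state is
the last state of the chain. -/
def chainTS {E : Type} [DecidableEq E] (n : ℕ) (spec : List (E × Dir)) :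
    TS (Fin (n + 1)) E where
  init := Fin.last n
  delta := fun s e => (chainDelta spec s.val e).bind fun r =>
    if h : r < n + 1 then some ⟨r, h⟩ else none

/-- Index set of the gadget transition systems of `U^σ_φ`. -/
inductive GIdx (m : ℕ) : Type
  | H : Fin (4 * m) → GIdx m
  | F0 : GIdx m
  | F1 : GIdx m
  | F2 : GIdx m
  | G : Fin m → GIdx m
  | D : Fin (3 * m) → GIdx m
  | T0 : Fin m → GIdx m
  | T1 : Fin m → GIdx m
  | T2 : Fin m → GIdx m
  | T3 : Fin m → GIdx m
  deriving DecidableEq, Fintype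

/-- Events of the gadgets of `U^σ_φ`; `u g` is the unique fresh event of gadget `g`
and `x vv` is the event of the variable `vv` of `φ`. -/
inductive GEvent (V : Type) (m : ℕ) : Type
  | k : GEvent V m
  | mev : GEvent V m
  | z : GEvent V m
  | q : Fin 4 → GEvent V m
  | v : Fin (4 * m) → GEvent V m
  | w : Fin m → GEvent V m
  | y : Fin m → GEvent V m
  | p : Fin (3 * m) → GEvent V m
  | a : Fin (3 * m) → GEvent V m
  | x : V → GEvent V m
  | u : GIdx m → GEvent V m
  deriving DecidableEq

/-- State spaces of the gadget transition systems. -/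
def GS (m : ℕ) : GIdx m → Type
  | .H _ => Fin 6
  | .F0 => Fin 9
  | .F1 => Fin 6
  | .F2 => Fin 10
  | .G _ => Fin 9
  | .D _ => Fin 9
  | .T0 _ => Fin 18
  | .T1 _ => Fin 5
  | .T2 _ => Fin 5
  | .T3 _ => Fin 5

def fmul4 {m : ℕ} (i : Fin m) (o : Fin 4) : Fin (4 * m) :=
  ⟨4 * i.val + o.val, by have h1 := i.isLt; have h2 := o.isLt; omega⟩

def fmul3 {m : ℕ} (i : Fin m) (o : Fin 3) : Fin (3 * m) :=
  ⟨3 * i.val + o.val, by have h1 := i.isLt; have h2 := o.isLt; omega⟩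

/-- The union `U^σ_φ` for a cubic monotone 3-CNF `φ` given by its clauses
`X : Fin m → Fin 3 → V`.  For `b = false` this is `U^{σ1}_φ`, for `b = true`
it is `U^{σ2}_φ` (in which the events `v_{4i}` and `w_i` of `T_{i,0}` are exchanged). -/
def gadget {V : Type} [DecidableEq V] (m : ℕ) (X : Fin m → Fin 3 → V) (b : Bool) :
    Union (GIdx m) (GS m) (GEvent V m) := fun idx =>
  match idx with
  | .H j => chainTS 5
      [(.k, .both), (.mev, .both), (.v j, .both), (.k, .both), (.u (.H j), .both)]
  | .F0 => chainTS 8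
      [(.k, .both), (.mev, .both), (.q 0, .both), (.k, .both), (.mev, .both),
       (.q 1, .both), (.k, .both), (.u .F0, .both)]
  | .F1 => chainTS 5
      [(.k, .both), (.q 2, .both), (.q 3, .both), (.k, .both), (.u .F1, .both)]
  | .F2 => chainTS 9
      [(.k, .both), (.q 2, .both), (.q 0, .both), (.z, .both), (.q 1, .both),
       (.z, .both), (.q 3, .both), (.k, .both), (.u .F2, .both)]
  | .G j => chainTS 8
      [(.k, .both), (.y j, .both), (.z, .fwd), (.z, .both), (.y j, .both),
       (.w j, .both), (.k, .both), (.u (.G j), .both)]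
  | .D l => chainTS 8
      [(.k, .both), (.p l, .both), (.z, .fwd), (.z, .both), (.p l, .both),
       (.a l, .both), (.k, .both), (.u (.D l), .both)]
  | .T0 i => chainTS 17
      [(.k, .both),
       ((if b then .w i else .v (fmul4 i 0)), .both),
       (.a (fmul3 i 0), .both),
       (.x (X i 0), .both),
       (.x (X i 0), .bwd),
       (.a (fmul3 i 0), .both),
       (.a (fmul3 i 1), .both),
       (.x (X i 1), .both),
       (.x (X i 1), .bwd),
       (.a (fmul3 i 1), .both),
       (.a (fmul3 i 2), .both),
       (.x (X i 2), .both),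
       (.x (X i 2), .bwd),
       (.a (fmul3 i 2), .both),
       ((if b then .v (fmul4 i 0) else .w i), .both),
       (.k, .both),
       (.u (.T0 i), .both)]
  | .T1 i => chainTS 4
      [(.x (X i 0), .both), (.v (fmul4 i 1), .both), (.x (X i 1), .both),
       (.u (.T1 i), .both)]
  | .T2 i => chainTS 4
      [(.x (X i 0), .both), (.v (fmul4 i 2), .both), (.x (X i 2), .both),
       (.u (.T2 i), .both)]
  | .T3 i => chainTS 4
      [(.x (X i 1), .both), (.v (fmul4 i 3), .both), (.x (X i 2), .both),
       (.u (.T3 i), .both)]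

/-- `φ` is a cubic monotone 3-CNF: the three variables of every clause are
pairwise distinct, and every variable occurs in exactly three clauses. -/
def Cubic {V : Type} [Fintype V] [DecidableEq V] (m : ℕ) (X : Fin m → Fin 3 → V) : Prop :=
  (∀ i : Fin m, Function.Injective (X i)) ∧
  ∀ vv : V, (Finset.univ.filter (fun pr : Fin m × Fin 3 => X pr.1 pr.2 = vv)).card = 3

/-- `M` is a one-in-three model of `φ`: it contains exactly one variable of
every clause. -/
def OneInThree {V : Type} (m : ℕ) (X : Fin m → Fin 3 → V) (M : Set V) : Prop :=
  ∀ i : Fin m, ∃! r : Fin 3, X i r ∈ M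

def hidx {m : ℕ} (hm : 0 < m) : Fin (4 * m) := ⟨0, by omega⟩

/-- The state `h_{0,2}` of the gadget `H_0`. -/
def h02 {m : ℕ} (hm : 0 < m) : Σ i : GIdx m, GS m i := ⟨GIdx.H (hidx hm), (2 : Fin 6)⟩

/-- The interaction `i` maps `x` to `y` and `y` to `x`: the condition a region imposes on the
supports `x`, `y` of the endpoints of a bidirectional edge with signature `i`. -/
def Joins (i : Interaction) (x y : Bool) : Prop :=
  i.apply x = some y ∧ i.apply y = some x

/-! ### Boolean facts about interactions -/

theorem Joins.unique {i : Interaction} {x y z : Bool} (h : Joins i x y) (h' : Joins i x z) :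
    y = z :=
  Option.some.inj (h.1.symm.trans h'.1)

theorem Joins.symm {i : Interaction} {x y : Bool} (h : Joins i x y) : Joins i y x :=
  ⟨h.2, h.1⟩

theorem joins_free {x y : Bool} (h : Joins .free x y) : x = false ∧ y = false := by
  cases x <;> cases y <;> simp_all [Joins, Interaction.apply]

theorem joins_swap {x y : Bool} (h : Joins .swap x y) : y = !x := by
  cases x <;> cases y <;> simp_all [Joins, Interaction.apply]

theorem joins_set {x y : Bool} (h : Joins .set x y) : x = true ∧ y = true := by
  cases x <;> cases y <;> simp_all [Joins, Interaction.apply]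

theorem eq_swap {i : Interaction} (hi : i ∈ tau1) (h : Joins i false true) : i = .swap := by
  cases i <;> simp_all [Joins, Interaction.apply, tau1]

theorem eq_nop_or_free {i : Interaction} (hi : i ∈ tau1) (h : Joins i false false) :
    i = .nop ∨ i = .free := by
  cases i <;> simp_all [Joins, Interaction.apply, tau1]

theorem joins_keep {i : Interaction} (hi : i = .nop ∨ i = .free) {x y : Bool}
    (h : Joins i x y) : x = y := by
  rcases hi with rfl | rfl <;> cases x <;> cases y <;> simp_all [Joins, Interaction.apply]

theorem eq_nop_or_swap {i : Interaction} (hi : i ∈ tau1) {b c : Bool}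
    (h : Joins i (!b) c) (h' : Joins i (!c) b) : i = .nop ∨ i = .swap := by
  cases i <;> cases b <;> cases c <;> simp_all [Joins, Interaction.apply, tau1]

/-- Only `set` can change the support along a bidirectional edge followed by an opposed edge with
the same event, as for the variable events in `T_{i,0}`. -/
theorem eq_of_ne_set {i : Interaction} (hi : i ∈ tau1) (hs : i ≠ .set) {s t s' : Bool}
    (h : Joins i s t) (h' : i.apply s' = some t) : s = s' := by
  cases i <;> cases s <;> cases s' <;> cases t <;> simp_all [Joins, Interaction.apply, tau1]

/-! ### Edges of chains -/

theorem chain_fwd {E : Type} [DecidableEq E] {n : ℕ} {spec : List (E × Dir)} {t : ℕ}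
    (ht : t + 1 < n + 1) {e : E} {d : Dir} (hs : spec[t]? = some (e, d))
    (hd : d.allowsFwd = true) :
    (chainTS n spec).delta ⟨t, by omega⟩ e = some ⟨t + 1, ht⟩ := by
  have h : t < n := by omega
  simp [chainTS, chainDelta, echk, hs, hd, h]

/-- The transition function of a chain tries the edge to the right first, so the edge to the left
is taken when, by `hn`, the edge to the right does not allow the event. -/
theorem chain_bwd {E : Type} [DecidableEq E] {n : ℕ} {spec : List (E × Dir)} {t : ℕ}
    (ht : t + 1 < n + 1) {e : E} {d : Dir} (hs : spec[t]? = some (e, d))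
    (hd : d.allowsBwd = true) (hn : echk spec[t + 1]? e true = false) :
    (chainTS n spec).delta ⟨t + 1, ht⟩ e = some ⟨t, by omega⟩ := by
  have h : t ≤ n := by omega
  simp only [chainTS, chainDelta, hn]
  simp [echk, hs, hd, h]

theorem chain_joins {E : Type} [DecidableEq E] {n : ℕ} {spec : List (E × Dir)}
    {sup : Fin (n + 1) → Bool} {sig : E → Interaction}
    (hc : ∀ s e s', (chainTS n spec).delta s e = some s' → (sig e).apply (sup s) = some (sup s'))
    (t : ℕ) (ht : t + 1 < n + 1) {e : E} (hs : spec[t]? = some (e, .both))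
    (hn : echk spec[t + 1]? e true = false) :
    Joins (sig e) (sup ⟨t, by omega⟩) (sup ⟨t + 1, ht⟩) :=
  ⟨hc _ _ _ (chain_fwd ht hs rfl), hc _ _ _ (chain_bwd ht hs rfl hn)⟩

/-! ### Consequences of `sig k = free` in the gadgets -/

section Gadgets

variable {V : Type} [DecidableEq V] {m : ℕ} {X : Fin m → Fin 3 → V}
  (R : URegion tau1 (gadget m X false))

theorem h_edges (hk : R.sig .k = .free) (j : Fin (4 * m)) :
    Joins (R.sig .mev) false (R.sup ⟨.H j, (2 : Fin 6)⟩) ∧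
      Joins (R.sig (.v j)) (R.sup ⟨.H j, (2 : Fin 6)⟩) false := by
  let f : Fin 6 → Bool := fun s => R.sup ⟨.H j, s⟩
  have hc := R.consistent (.H j)
  have e0 : Joins (R.sig (.k)) (f 0) (f 1) :=
    chain_joins (sup := f) hc 0 (by decide) rfl (by simp [echk, Dir.allowsFwd])
  have e1 : Joins (R.sig (.mev)) (f 1) (f 2) :=
    chain_joins (sup := f) hc 1 (by decide) rfl (by simp [echk, Dir.allowsFwd])
  have e2 : Joins (R.sig (.v j)) (f 2) (f 3) :=
    chain_joins (sup := f) hc 2 (by decide) rfl (by simp [echk, Dir.allowsFwd])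
  have e3 : Joins (R.sig (.k)) (f 3) (f 4) :=
    chain_joins (sup := f) hc 3 (by decide) rfl (by simp [echk, Dir.allowsFwd])
  rw [hk] at e0 e3
  rw [(joins_free e0).2] at e1
  rw [(joins_free e3).1] at e2
  exact ⟨e1, e2⟩

theorem k_free (hm : 0 < m) (hinh : (R.sig .k).apply (R.sup (h02 hm)) = none) :
    R.sig .k = .free ∧ R.sup (h02 hm) = true := by
  have hk := R.sig_mem .k
  generalize R.sig .k = i at *
  generalize R.sup (h02 hm) = x at *
  cases i <;> cases x <;> simp_all [Interaction.apply, tau1]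

theorem m_swap (hm : 0 < m) (hk : R.sig .k = .free) (h2 : R.sup (h02 hm) = true) :
    R.sig .mev = .swap := by
  have h := (h_edges R hk (hidx hm)).1
  rw [show R.sup ⟨.H (hidx hm), (2 : Fin 6)⟩ = true from h2] at h
  exact eq_swap (R.sig_mem _) h

theorem v_swap (hk : R.sig .k = .free) (hM : R.sig .mev = .swap) (j : Fin (4 * m)) :
    R.sig (.v j) = .swap := by
  obtain ⟨h1, h2⟩ := h_edges R hk j
  rw [hM] at h1
  rw [joins_swap h1] at h2
  exact eq_swap (R.sig_mem _) h2.symm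

theorem q_swap (hk : R.sig .k = .free) (hM : R.sig .mev = .swap) :
    R.sig (.q 0) = .swap ∧ R.sig (.q 1) = .swap := by
  let f : Fin 9 → Bool := fun s => R.sup ⟨.F0, s⟩
  have hc := R.consistent (.F0)
  have e0 : Joins (R.sig (.k)) (f 0) (f 1) :=
    chain_joins (sup := f) hc 0 (by decide) rfl (by simp [echk, Dir.allowsFwd])
  have e1 : Joins (R.sig (.mev)) (f 1) (f 2) :=
    chain_joins (sup := f) hc 1 (by decide) rfl (by simp [echk, Dir.allowsFwd])
  have e2 : Joins (R.sig (.q 0)) (f 2) (f 3) :=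
    chain_joins (sup := f) hc 2 (by decide) rfl (by simp [echk, Dir.allowsFwd])
  have e3 : Joins (R.sig (.k)) (f 3) (f 4) :=
    chain_joins (sup := f) hc 3 (by decide) rfl (by simp [echk, Dir.allowsFwd])
  have e4 : Joins (R.sig (.mev)) (f 4) (f 5) :=
    chain_joins (sup := f) hc 4 (by decide) rfl (by simp [echk, Dir.allowsFwd])
  have e5 : Joins (R.sig (.q 1)) (f 5) (f 6) :=
    chain_joins (sup := f) hc 5 (by decide) rfl (by simp [echk, Dir.allowsFwd])
  have e6 : Joins (R.sig (.k)) (f 6) (f 7) :=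
    chain_joins (sup := f) hc 6 (by decide) rfl (by simp [echk, Dir.allowsFwd])
  rw [hk] at e0 e3 e6
  rw [hM, (joins_free e0).2] at e1
  rw [hM, (joins_free e3).2] at e4
  rw [joins_swap e1, (joins_free e3).1] at e2
  rw [joins_swap e4, (joins_free e6).1] at e5
  exact ⟨eq_swap (R.sig_mem _) e2.symm, eq_swap (R.sig_mem _) e5.symm⟩

/-- `F_1` makes `q_2` and `q_3` send `0` to a common value. -/
theorem q_joins (hk : R.sig .k = .free) :
    ∃ b, Joins (R.sig (.q 2)) false b ∧ Joins (R.sig (.q 3)) false b := by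
  let f : Fin 6 → Bool := fun s => R.sup ⟨.F1, s⟩
  have hc := R.consistent (.F1)
  have e0 : Joins (R.sig (.k)) (f 0) (f 1) :=
    chain_joins (sup := f) hc 0 (by decide) rfl (by simp [echk, Dir.allowsFwd])
  have e1 : Joins (R.sig (.q 2)) (f 1) (f 2) :=
    chain_joins (sup := f) hc 1 (by decide) rfl (by simp [echk, Dir.allowsFwd])
  have e2 : Joins (R.sig (.q 3)) (f 2) (f 3) :=
    chain_joins (sup := f) hc 2 (by decide) rfl (by simp [echk, Dir.allowsFwd])
  have e3 : Joins (R.sig (.k)) (f 3) (f 4) :=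
    chain_joins (sup := f) hc 3 (by decide) rfl (by simp [echk, Dir.allowsFwd])
  rw [hk] at e0 e3
  rw [(joins_free e0).2] at e1
  rw [(joins_free e3).1] at e2
  exact ⟨_, e1, e2.symm⟩

/-- `F_2` contains the path `f_{2,2} <-q_0-> <-z-> <-q_1-> <-z-> f_{2,6}` whose ends have equal
support by `q_joins`, and whose `q`-edges swap; thus `z` is `nop` or `swap`. -/
theorem z_flip (hk : R.sig .k = .free) (hM : R.sig .mev = .swap) :
    R.sig .z = .nop ∨ R.sig .z = .swap := by
  obtain ⟨hq0, hq1⟩ := q_swap R hk hM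
  obtain ⟨b, hq2, hq3⟩ := q_joins R hk
  let f : Fin 10 → Bool := fun s => R.sup ⟨.F2, s⟩
  have hc := R.consistent (.F2)
  have e0 : Joins (R.sig (.k)) (f 0) (f 1) :=
    chain_joins (sup := f) hc 0 (by decide) rfl (by simp [echk, Dir.allowsFwd])
  have e1 : Joins (R.sig (.q 2)) (f 1) (f 2) :=
    chain_joins (sup := f) hc 1 (by decide) rfl (by simp [echk, Dir.allowsFwd])
  have e2 : Joins (R.sig (.q 0)) (f 2) (f 3) :=
    chain_joins (sup := f) hc 2 (by decide) rfl (by simp [echk, Dir.allowsFwd])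
  have e3 : Joins (R.sig (.z)) (f 3) (f 4) :=
    chain_joins (sup := f) hc 3 (by decide) rfl (by simp [echk, Dir.allowsFwd])
  have e4 : Joins (R.sig (.q 1)) (f 4) (f 5) :=
    chain_joins (sup := f) hc 4 (by decide) rfl (by simp [echk, Dir.allowsFwd])
  have e5 : Joins (R.sig (.z)) (f 5) (f 6) :=
    chain_joins (sup := f) hc 5 (by decide) rfl (by simp [echk, Dir.allowsFwd])
  have e6 : Joins (R.sig (.q 3)) (f 6) (f 7) :=
    chain_joins (sup := f) hc 6 (by decide) rfl (by simp [echk, Dir.allowsFwd])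
  have e7 : Joins (R.sig (.k)) (f 7) (f 8) :=
    chain_joins (sup := f) hc 7 (by decide) rfl (by simp [echk, Dir.allowsFwd])
  rw [hk] at e0 e7
  rw [(joins_free e0).2] at e1
  rw [(joins_free e7).1] at e6
  rw [hq0, e1.unique hq2] at e2
  rw [joins_swap e2] at e3
  rw [hq1] at e4
  rw [joins_swap e4, e6.symm.unique hq3] at e5
  exact eq_nop_or_swap (R.sig_mem _) e3 e5

theorem zz_eq {i : Interaction} (hi : i = .nop ∨ i = .swap) {x y z : Bool}
    (h : i.apply x = some y) (h' : i.apply y = some z) : z = x := by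
  rcases hi with rfl | rfl <;> cases x <;> cases y <;> simp_all [Interaction.apply]

theorem w_keep (hk : R.sig .k = .free) (hz : R.sig .z = .nop ∨ R.sig .z = .swap) (j : Fin m) :
    R.sig (.w j) = .nop ∨ R.sig (.w j) = .free := by
  let f : Fin 9 → Bool := fun s => R.sup ⟨.G j, s⟩
  have hc := R.consistent (.G j)
  have e0 : Joins (R.sig (.k)) (f 0) (f 1) :=
    chain_joins (sup := f) hc 0 (by decide) rfl (by simp [echk, Dir.allowsFwd])
  have e1 : Joins (R.sig (.y j)) (f 1) (f 2) :=
    chain_joins (sup := f) hc 1 (by decide) rfl (by simp [echk, Dir.allowsFwd])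
  have e3 : Joins (R.sig (.z)) (f 3) (f 4) :=
    chain_joins (sup := f) hc 3 (by decide) rfl (by simp [echk, Dir.allowsFwd])
  have e4 : Joins (R.sig (.y j)) (f 4) (f 5) :=
    chain_joins (sup := f) hc 4 (by decide) rfl (by simp [echk, Dir.allowsFwd])
  have e5 : Joins (R.sig (.w j)) (f 5) (f 6) :=
    chain_joins (sup := f) hc 5 (by decide) rfl (by simp [echk, Dir.allowsFwd])
  have e6 : Joins (R.sig (.k)) (f 6) (f 7) :=
    chain_joins (sup := f) hc 6 (by decide) rfl (by simp [echk, Dir.allowsFwd])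
  have e2 : (R.sig .z).apply (f 2) = some (f 3) :=
    hc _ _ _ (chain_fwd (t := 2) (d := .fwd) (by decide) rfl rfl)
  rw [hk] at e0 e6
  rw [(joins_free e0).2] at e1
  rw [(joins_free e6).1] at e5
  -- `y` has the same effect on both sides of the support-preserving `zz`.
  rw [zz_eq hz e2 e3.1] at e4
  rw [← e1.symm.unique e4] at e5
  exact eq_nop_or_free (R.sig_mem _) e5

theorem a_keep (hk : R.sig .k = .free) (hz : R.sig .z = .nop ∨ R.sig .z = .swap) (l : Fin (3 * m)) :
    R.sig (.a l) = .nop ∨ R.sig (.a l) = .free := by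
  let f : Fin 9 → Bool := fun s => R.sup ⟨.D l, s⟩
  have hc := R.consistent (.D l)
  have e0 : Joins (R.sig (.k)) (f 0) (f 1) :=
    chain_joins (sup := f) hc 0 (by decide) rfl (by simp [echk, Dir.allowsFwd])
  have e1 : Joins (R.sig (.p l)) (f 1) (f 2) :=
    chain_joins (sup := f) hc 1 (by decide) rfl (by simp [echk, Dir.allowsFwd])
  have e3 : Joins (R.sig (.z)) (f 3) (f 4) :=
    chain_joins (sup := f) hc 3 (by decide) rfl (by simp [echk, Dir.allowsFwd])
  have e4 : Joins (R.sig (.p l)) (f 4) (f 5) :=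
    chain_joins (sup := f) hc 4 (by decide) rfl (by simp [echk, Dir.allowsFwd])
  have e5 : Joins (R.sig (.a l)) (f 5) (f 6) :=
    chain_joins (sup := f) hc 5 (by decide) rfl (by simp [echk, Dir.allowsFwd])
  have e6 : Joins (R.sig (.k)) (f 6) (f 7) :=
    chain_joins (sup := f) hc 6 (by decide) rfl (by simp [echk, Dir.allowsFwd])
  have e2 : (R.sig .z).apply (f 2) = some (f 3) :=
    hc _ _ _ (chain_fwd (t := 2) (d := .fwd) (by decide) rfl rfl)
  rw [hk] at e0 e6
  rw [(joins_free e0).2] at e1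
  rw [(joins_free e6).1] at e5
  -- `p` has the same effect on both sides of the support-preserving `zz`.
  rw [zz_eq hz e2 e3.1] at e4
  rw [← e1.symm.unique e4] at e5
  exact eq_nop_or_free (R.sig_mem _) e5

theorem exists_set (hk : R.sig .k = .free) (hv : ∀ j, R.sig (.v j) = .swap)
    (hw : ∀ j, R.sig (.w j) = .nop ∨ R.sig (.w j) = .free)
    (ha : ∀ l, R.sig (.a l) = .nop ∨ R.sig (.a l) = .free) (i : Fin m) :
    ∃ r, R.sig (.x (X i r)) = .set := by
  by_contra! hx
  let f : Fin 18 → Bool := fun s => R.sup ⟨.T0 i, s⟩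
  have hc := R.consistent (.T0 i)
  have e0 : Joins (R.sig (.k)) (f 0) (f 1) :=
    chain_joins (sup := f) hc 0 (by decide) rfl (by simp [echk, Dir.allowsFwd])
  have e1 : Joins (R.sig (.v (fmul4 i 0))) (f 1) (f 2) :=
    chain_joins (sup := f) hc 1 (by decide) rfl (by simp [echk, Dir.allowsFwd])
  have e2 : Joins (R.sig (.a (fmul3 i 0))) (f 2) (f 3) :=
    chain_joins (sup := f) hc 2 (by decide) rfl (by simp [echk, Dir.allowsFwd, fmul3])
  have e3 : Joins (R.sig (.x (X i 0))) (f 3) (f 4) :=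
    chain_joins (sup := f) hc 3 (by decide) rfl (by simp [echk, Dir.allowsFwd])
  have e5 : Joins (R.sig (.a (fmul3 i 0))) (f 5) (f 6) :=
    chain_joins (sup := f) hc 5 (by decide) rfl (by simp [echk, Dir.allowsFwd, fmul3])
  have e6 : Joins (R.sig (.a (fmul3 i 1))) (f 6) (f 7) :=
    chain_joins (sup := f) hc 6 (by decide) rfl (by simp [echk, Dir.allowsFwd, fmul3])
  have e7 : Joins (R.sig (.x (X i 1))) (f 7) (f 8) :=
    chain_joins (sup := f) hc 7 (by decide) rfl (by simp [echk, Dir.allowsFwd])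
  have e9 : Joins (R.sig (.a (fmul3 i 1))) (f 9) (f 10) :=
    chain_joins (sup := f) hc 9 (by decide) rfl (by simp [echk, Dir.allowsFwd, fmul3])
  have e10 : Joins (R.sig (.a (fmul3 i 2))) (f 10) (f 11) :=
    chain_joins (sup := f) hc 10 (by decide) rfl (by simp [echk, Dir.allowsFwd, fmul3])
  have e11 : Joins (R.sig (.x (X i 2))) (f 11) (f 12) :=
    chain_joins (sup := f) hc 11 (by decide) rfl (by simp [echk, Dir.allowsFwd])
  have e13 : Joins (R.sig (.a (fmul3 i 2))) (f 13) (f 14) :=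
    chain_joins (sup := f) hc 13 (by decide) rfl (by simp [echk, Dir.allowsFwd, fmul3])
  have e14 : Joins (R.sig (.w i)) (f 14) (f 15) :=
    chain_joins (sup := f) hc 14 (by decide) rfl (by simp [echk, Dir.allowsFwd])
  have e15 : Joins (R.sig (.k)) (f 15) (f 16) :=
    chain_joins (sup := f) hc 15 (by decide) rfl (by simp [echk, Dir.allowsFwd])
  have e4 : (R.sig (.x (X i 0))).apply (f 5) = some (f 4) :=
    hc _ _ _ (chain_bwd (t := 4) (d := .bwd) (by decide) rfl rfl (by simp [echk]))
  have e8 : (R.sig (.x (X i 1))).apply (f 9) = some (f 8) :=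
    hc _ _ _ (chain_bwd (t := 8) (d := .bwd) (by decide) rfl rfl (by simp [echk]))
  have e12 : (R.sig (.x (X i 2))).apply (f 13) = some (f 12) :=
    hc _ _ _ (chain_bwd (t := 12) (d := .bwd) (by decide) rfl rfl (by simp [echk]))
  rw [hk] at e0 e15
  rw [hv, (joins_free e0).2] at e1
  -- The support is `1` at state `2`, `0` at state `14`, and constant in between.
  have start : f 2 = true := joins_swap e1
  have finish : f 14 = false := (joins_keep (hw i) e14).trans (joins_free e15).1
  have step0 : f 3 = f 5 := eq_of_ne_set (R.sig_mem _) (hx 0) e3 e4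
  have step1 : f 7 = f 9 := eq_of_ne_set (R.sig_mem _) (hx 1) e7 e8
  have step2 : f 11 = f 13 := eq_of_ne_set (R.sig_mem _) (hx 2) e11 e12
  have path : f 2 = f 14 :=
    calc f 2 = f 3 := joins_keep (ha _) e2
      _ = f 5 := step0
      _ = f 6 := joins_keep (ha _) e5
      _ = f 7 := joins_keep (ha _) e6
      _ = f 9 := step1
      _ = f 10 := joins_keep (ha _) e9
      _ = f 11 := joins_keep (ha _) e10
      _ = f 13 := step2
      _ = f 14 := joins_keep (ha _) e13
  rw [start, finish] at path
  exact Bool.noConfusion path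

/-- Two `set` edges cannot be linked by a `swap` edge. -/
theorem not_set_swap_set {i j l : Interaction} {x y z t : Bool} (hi : Joins i x y)
    (hj : Joins j y z) (hl : Joins l z t) (hswap : j = .swap) : ¬ (i = .set ∧ l = .set) := by
  rintro ⟨rfl, rfl⟩
  subst hswap
  have h := joins_swap hj
  rw [(joins_set hi).2, (joins_set hl).1] at h
  exact Bool.noConfusion h

theorem not_both_set (hv : ∀ j, R.sig (.v j) = .swap) (i : Fin m) :
    ¬ (R.sig (.x (X i 0)) = .set ∧ R.sig (.x (X i 1)) = .set) ∧
    ¬ (R.sig (.x (X i 0)) = .set ∧ R.sig (.x (X i 2)) = .set) ∧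
    ¬ (R.sig (.x (X i 1)) = .set ∧ R.sig (.x (X i 2)) = .set) := by
  refine ⟨?_, ?_, ?_⟩
  · let f : Fin 5 → Bool := fun s => R.sup ⟨.T1 i, s⟩
    have hc := R.consistent (.T1 i)
    have e0 : Joins (R.sig (.x (X i 0))) (f 0) (f 1) :=
      chain_joins (sup := f) hc 0 (by decide) rfl (by simp [echk, Dir.allowsFwd])
    have e1 : Joins (R.sig (.v (fmul4 i 1))) (f 1) (f 2) :=
      chain_joins (sup := f) hc 1 (by decide) rfl (by simp [echk, Dir.allowsFwd])
    have e2 : Joins (R.sig (.x (X i 1))) (f 2) (f 3) :=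
      chain_joins (sup := f) hc 2 (by decide) rfl (by simp [echk, Dir.allowsFwd])
    exact not_set_swap_set e0 e1 e2 (hv _)
  · let f : Fin 5 → Bool := fun s => R.sup ⟨.T2 i, s⟩
    have hc := R.consistent (.T2 i)
    have e0 : Joins (R.sig (.x (X i 0))) (f 0) (f 1) :=
      chain_joins (sup := f) hc 0 (by decide) rfl (by simp [echk, Dir.allowsFwd])
    have e1 : Joins (R.sig (.v (fmul4 i 2))) (f 1) (f 2) :=
      chain_joins (sup := f) hc 1 (by decide) rfl (by simp [echk, Dir.allowsFwd])
    have e2 : Joins (R.sig (.x (X i 2))) (f 2) (f 3) :=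
      chain_joins (sup := f) hc 2 (by decide) rfl (by simp [echk, Dir.allowsFwd])
    exact not_set_swap_set e0 e1 e2 (hv _)
  · let f : Fin 5 → Bool := fun s => R.sup ⟨.T3 i, s⟩
    have hc := R.consistent (.T3 i)
    have e0 : Joins (R.sig (.x (X i 1))) (f 0) (f 1) :=
      chain_joins (sup := f) hc 0 (by decide) rfl (by simp [echk, Dir.allowsFwd])
    have e1 : Joins (R.sig (.v (fmul4 i 3))) (f 1) (f 2) :=
      chain_joins (sup := f) hc 1 (by decide) rfl (by simp [echk, Dir.allowsFwd])
    have e2 : Joins (R.sig (.x (X i 2))) (f 2) (f 3) :=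
      chain_joins (sup := f) hc 2 (by decide) rfl (by simp [echk, Dir.allowsFwd])
    exact not_set_swap_set e0 e1 e2 (hv _)

end Gadgets

/-- For `τ = {nop, set, swap, free}`, if a `τ`-region of
`U^{σ1}_φ` inhibits `k` at `h_{0,2}`, then `M = {X ∈ V(φ) : sig X = set}` is a
one-in-three model of `φ`. -/
theorem sigma1_set_model {V : Type} [Fintype V] [DecidableEq V]
    (m : ℕ) (hm : 0 < m) (X : Fin m → Fin 3 → V) (hφ : Cubic m X)
    (R : URegion tau1 (gadget m X false))
    (hinh : (R.sig GEvent.k).apply (R.sup (h02 hm)) = none) :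
    OneInThree m X {vv : V | R.sig (GEvent.x vv) = Interaction.set} := by
  obtain ⟨hk, h2⟩ := k_free R hm hinh
  have hM := m_swap R hm hk h2
  have hv := v_swap R hk hM
  have hz := z_flip R hk hM
  intro i
  obtain ⟨r, hr⟩ := exists_set R hk hv (w_keep R hk hz) (a_keep R hk hz) i
  obtain ⟨h01, h02', h12⟩ := not_both_set R hv i
  refine ⟨r, hr, fun s hs => ?_⟩
  simp only [Set.mem_ofPred_eq] at hs
  fin_cases r <;> fin_cases s <;> simp_all

end PetriNets
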